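/- Let q ∈ ℝ with |q| > 1 and n ≥ 1. With H = ℓ²(ℤ × ℕⁿ), X₁ the operator X₁ e_{(k₀,k)} = q^{−(k₁+⋯+k_n)} e_{(k₀+1,k)}, and F the sign operator F e_{(k₀,k)} = sign(k₀) e_{(k₀,k)} (sign(k₀) = 1 for k₀ > 0, −1 for k₀ ≤ 0), the operator X₁*(F X₁ − X₁ F) is trace class with Tr[X₁*(F X₁ − X₁ F)] = 2 (1 − q⁻²)⁻ⁿ. Consequently the index pairing of the odd Fredholm module μ_odd with the unitary V_{(2n+1)}, given by ⟨μ_odd, V_{(2n+1)}⟩ = −(1/2)(q⁻² − 1)ⁿ Tr[X₁*(F X₁ − X₁ F)], equals (−1)^{n+1}. -/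

import Mathlib

/-- The standard orthonormal basis vector of `ℓ²(ℤ × ℕⁿ)` at `(k₀, k)`. -/
noncomputable def eVecZ (n : ℕ) (p : ℤ × (Fin n → ℕ)) :
    lp (fun _ : ℤ × (Fin n → ℕ) => ℂ) 2 :=
  lp.single 2 p 1

/-- A bounded operator on `ℓ²(ℤ × ℕⁿ)` is Hilbert–Schmidt if the squared norms of the
images of the standard basis vectors are summable. -/
def IsHilbertSchmidt {n : ℕ}
    (T : lp (fun _ : ℤ × (Fin n → ℕ) => ℂ) 2 →L[ℂ] lp (fun _ : ℤ × (Fin n → ℕ) => ℂ) 2) :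
    Prop :=
  Summable fun p : ℤ × (Fin n → ℕ) => ‖T (eVecZ n p)‖ ^ 2

/-- A bounded operator is trace class iff it is a product of two Hilbert–Schmidt
operators. -/
def IsTraceClass {n : ℕ}
    (T : lp (fun _ : ℤ × (Fin n → ℕ) => ℂ) 2 →L[ℂ] lp (fun _ : ℤ × (Fin n → ℕ) => ℂ) 2) :
    Prop :=
  ∃ A B, IsHilbertSchmidt A ∧ IsHilbertSchmidt B ∧ T = A * B

lemma hasSum_geom_pi (r : ℝ) (h0 : 0 ≤ r) (h1 : r < 1) (n : ℕ) :
    HasSum (fun k : Fin n → ℕ => r ^ (∑ j, k j)) (((1 - r) ^ n)⁻¹) := by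
  induction n with
  | zero => simp
  | succ n ih =>
    have hg := hasSum_geometric_of_lt_one h0 h1
    have hs := hg.summable.mul_of_nonneg ih.summable (fun i => pow_nonneg h0 _)
      (fun k => pow_nonneg h0 _)
    have hm := hg.mul ih hs
    rw [← (Fin.consEquiv (fun _ : Fin (n + 1) => ℕ)).hasSum_iff]
    rw [pow_succ', mul_inv]
    have he : ((fun k : Fin (n + 1) → ℕ => r ^ (∑ j, k j)) ∘
        (Fin.consEquiv (fun _ : Fin (n + 1) => ℕ))) =
        fun x : ℕ × (Fin n → ℕ) => r ^ x.1 * r ^ (∑ j, x.2 j) := by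
      funext p
      simp [Fin.consEquiv, Fin.sum_univ_succ, pow_add]
    exact he ▸ hm

lemma hasSum_slice {K E : Type*} [AddCommMonoid E] [TopologicalSpace E] (m : ℤ) (f : K → E)
    (a : E) (h : HasSum f a) :
    HasSum (fun p : ℤ × K => if p.1 = m then f p.2 else 0) a := by
  have hinj : Function.Injective (fun k : K => (m, k)) := fun a b h => by simpa using h
  rw [← hinj.hasSum_iff]
  · simpa [Function.comp_def] using h
  · rintro ⟨k₀, k⟩ hk
    have : k₀ ≠ m := by
      rintro rfl
      exact hk ⟨k, rfl⟩
    simp [this]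

lemma norm_eVecZ (n : ℕ) (p : ℤ × (Fin n → ℕ)) : ‖eVecZ n p‖ = 1 := by
  unfold eVecZ
  rw [lp.norm_single (by norm_num)]
  simp

lemma inner_eVecZ (n : ℕ) (p : ℤ × (Fin n → ℕ)) : (inner ℂ (eVecZ n p) (eVecZ n p) : ℂ) = 1 := by
  rw [inner_self_eq_norm_sq_to_K, norm_eVecZ]
  simp

lemma opMul_apply {n : ℕ}
    (S T : lp (fun _ : ℤ × (Fin n → ℕ) => ℂ) 2 →L[ℂ] lp (fun _ : ℤ × (Fin n → ℕ) => ℂ) 2)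
    (v : lp (fun _ : ℤ × (Fin n → ℕ) => ℂ) 2) : (S * T) v = S (T v) := rfl

lemma ext_eVecZ {n : ℕ}
    (S T : lp (fun _ : ℤ × (Fin n → ℕ) => ℂ) 2 →L[ℂ] lp (fun _ : ℤ × (Fin n → ℕ) => ℂ) 2)
    (h : ∀ k₀ k, S (eVecZ n (k₀, k)) = T (eVecZ n (k₀, k))) : S = T := by
  refine lp.ext_continuousLinearMap (ENNReal.ofNat_ne_top (n := nat_lit 2)) fun i => ?_
  refine ContinuousLinearMap.ext_ring ?_
  exact h i.1 i.2

/-- The index pairing of the odd Fredholm module with the unitary `V_{(2n+1)}`: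
`X₁*[F, X₁]` is trace class with trace `2(1-q⁻²)⁻ⁿ`, and the pairing
`⟨μ_odd, V_{(2n+1)}⟩ = -½ (q⁻²-1)ⁿ Tr(X₁*[F,X₁])` equals `(-1)^{n+1}`. -/
theorem odd_pairing (q : ℝ) (hq : 1 < |q|) (n : ℕ) (hn : 1 ≤ n)
    (X₁ F : lp (fun _ : ℤ × (Fin n → ℕ) => ℂ) 2 →L[ℂ] lp (fun _ : ℤ × (Fin n → ℕ) => ℂ) 2)
    (hX1 : ∀ (k₀ : ℤ) (k : Fin n → ℕ),
      X₁ (eVecZ n (k₀, k)) = (((q ^ (∑ j, k j))⁻¹ : ℝ) : ℂ) • eVecZ n (k₀ + 1, k))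
    (hX1s : ∀ (k₀ : ℤ) (k : Fin n → ℕ),
      star X₁ (eVecZ n (k₀, k)) = (((q ^ (∑ j, k j))⁻¹ : ℝ) : ℂ) • eVecZ n (k₀ - 1, k))
    (hF : ∀ (k₀ : ℤ) (k : Fin n → ℕ),
      F (eVecZ n (k₀, k)) = (if 0 < k₀ then (1 : ℂ) else -1) • eVecZ n (k₀, k)) :
    IsTraceClass (star X₁ * (F * X₁ - X₁ * F)) ∧
    (Summable fun p : ℤ × (Fin n → ℕ) =>
      (inner ℂ (eVecZ n p) ((star X₁ * (F * X₁ - X₁ * F)) (eVecZ n p)) : ℂ)) ∧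
    ∑' p : ℤ × (Fin n → ℕ),
        (inner ℂ (eVecZ n p) ((star X₁ * (F * X₁ - X₁ * F)) (eVecZ n p)) : ℂ) =
      ((2 * ((1 - (q ^ 2)⁻¹) ^ n)⁻¹ : ℝ) : ℂ) ∧
    (-(2 : ℂ)⁻¹ * (((q : ℂ) ^ 2)⁻¹ - 1) ^ n) *
        ∑' p : ℤ × (Fin n → ℕ),
          (inner ℂ (eVecZ n p) ((star X₁ * (F * X₁ - X₁ * F)) (eVecZ n p)) : ℂ) =
      (-1) ^ (n + 1) := by
  have hq2 : 1 < q ^ 2 := by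
    have := one_lt_sq_iff_one_lt_abs (a := q)
    exact this.2 hq
  have hr0 : 0 ≤ (q ^ 2)⁻¹ := by positivity
  have hr1 : (q ^ 2)⁻¹ < 1 := inv_lt_one_of_one_lt₀ hq2
  have hgeo := hasSum_geom_pi _ hr0 hr1 n
  have hpow : ∀ m : ℕ, ((q ^ 2)⁻¹) ^ m = ((q ^ m)⁻¹) ^ 2 := by
    intro m
    rw [inv_pow, inv_pow, ← pow_mul, ← pow_mul, mul_comm]
  have habs : ∀ m : ℕ, (|q| ^ m) ^ 2 = (q ^ m) ^ 2 := by
    intro m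
    rw [← abs_pow, sq_abs]
  have hD : ∀ k₀ k, (F * X₁ - X₁ * F) (eVecZ n (k₀, k)) =
      (if k₀ = 0 then 2 * (((q ^ (∑ j, k j))⁻¹ : ℝ) : ℂ) else 0) • eVecZ n (k₀ + 1, k) := by
    intro k₀ k
    simp only [sub_apply, opMul_apply, hX1, hF, map_smul,
      smul_smul, ← sub_smul]
    congr 1
    split_ifs <;> first | omega | ring
  have hA : ∀ k₀ k, ((2 : ℂ)⁻¹ • (star X₁ * F - F * star X₁)) (eVecZ n (k₀, k)) =
      (if k₀ = 1 then (((q ^ (∑ j, k j))⁻¹ : ℝ) : ℂ) else 0) • eVecZ n (k₀ - 1, k) := by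
    intro k₀ k
    simp only [smul_apply, sub_apply,
      opMul_apply, hX1s, hF, map_smul, smul_smul, ← sub_smul]
    congr 1
    split_ifs <;> first | omega | ring
  have hT : ∀ k₀ k, (star X₁ * (F * X₁ - X₁ * F)) (eVecZ n (k₀, k)) =
      (if k₀ = 0 then ((2 * ((q ^ 2)⁻¹) ^ (∑ j, k j) : ℝ) : ℂ) else 0) • eVecZ n (k₀, k) := by
    intro k₀ k
    rw [opMul_apply, hD, map_smul, hX1s, smul_smul, hpow]
    simp only [add_sub_cancel_right]
    congr 1
    split_ifs
    · push_cast; ring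
    · ring
  have hin : (fun p : ℤ × (Fin n → ℕ) =>
      (inner ℂ (eVecZ n p) ((star X₁ * (F * X₁ - X₁ * F)) (eVecZ n p)) : ℂ)) =
      fun p => if p.1 = 0 then ((2 * ((q ^ 2)⁻¹) ^ (∑ j, p.2 j) : ℝ) : ℂ) else 0 := by
    funext p
    obtain ⟨k₀, k⟩ := p
    rw [hT, inner_smul_right, inner_eVecZ, mul_one]
  have hsum : HasSum (fun p : ℤ × (Fin n → ℕ) =>
      (inner ℂ (eVecZ n p) ((star X₁ * (F * X₁ - X₁ * F)) (eVecZ n p)) : ℂ))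
      ((2 * ((1 - (q ^ 2)⁻¹) ^ n)⁻¹ : ℝ) : ℂ) := by
    rw [hin]
    exact hasSum_slice 0 (fun k : Fin n → ℕ => ((2 * ((q ^ 2)⁻¹) ^ (∑ j, k j) : ℝ) : ℂ)) _
      (Complex.hasSum_ofReal.2 (hgeo.mul_left 2))
  refine ⟨⟨(2 : ℂ)⁻¹ • (star X₁ * F - F * star X₁), F * X₁ - X₁ * F, ?_, ?_, ?_⟩,
    hsum.summable, hsum.tsum_eq, ?_⟩
  · have := (hasSum_slice 1 _ _ hgeo).summable
    refine this.congr ?_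
    rintro ⟨k₀, k⟩
    rw [hA, norm_smul, norm_eVecZ, hpow]
    split_ifs <;> simp [habs]
  · have := (hasSum_slice 0 _ _ (hgeo.mul_left 4)).summable
    refine this.congr ?_
    rintro ⟨k₀, k⟩
    rw [hD, norm_smul, norm_eVecZ, hpow]
    split_ifs
    · simp [mul_pow, habs]; norm_num
    · simp
  · refine ext_eVecZ _ _ fun k₀ k => ?_
    rw [hT, opMul_apply, hD, map_smul, hA, smul_smul, hpow]
    simp only [add_sub_cancel_right]
    congr 1
    split_ifs <;> first | omega | (push_cast; ring)
  · rw [hsum.tsum_eq]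
    have hne : (1 - ((q : ℂ) ^ 2)⁻¹) ≠ 0 := by
      have : (1 - (q ^ 2)⁻¹ : ℝ) ≠ 0 := by linarith
      exact_mod_cast this
    have : (((q : ℂ) ^ 2)⁻¹ - 1) = (-1) * (1 - ((q : ℂ) ^ 2)⁻¹) := by ring
    rw [this, mul_pow]
    push_cast
    have h2 := pow_ne_zero n hne
    generalize (1 - ((q : ℂ) ^ 2)⁻¹) ^ n = z at *
    rw [pow_succ]
    field_simp
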